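/- Let (Ω,Σ,μ) be a probability space and φ : Ω → Ω a measure-preserving measurable transformation with Perron–Frobenius operator P on L¹(Ω,Σ,μ). Then the following are equivalent: (i) for every f ∈ L¹(Ω,Σ,μ) the sequence (Pⁿf) converges in L¹-norm; (ii) for every B ∈ Σ with μ(B) > 0 there exist D ∈ Σ with μ(D) > 0 and a constant c > 0 such that liminf_{n→∞} inf_{A∈Σ} ( μ(φ⁻ⁿ(A) ∩ B) − c · μ(D ∩ A) ) ≥ 0. -/

import Mathlib

open MeasureTheory Filter Set Topology
open scoped symmDiff ENNReal

/-!
For an isometry `V` of a Hilbert space, the vectors `f` with `(V†)ⁿ f` convergent form a closed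
subspace `S`. It contains each `ker (V†)ⁿ = (range Vⁿ)ᗮ`, so `Sᗮ ≤ ⋂ n, range Vⁿ`. If `V` fixes
this intersection, then so does `V†`, whence `Sᗮ ≤ S` and `S` is everything.

Apply this to the Koopman operator `f ↦ f ∘ φ` on `L²`, whose adjoint is the restriction of `P`;
convergence passes from `L²` to `L¹` by density. The superlevel sets of a function in all the ranges
agree for every `n`, up to a null set, with some `φ⁻ⁿ(Sₙ)`. The lower bound condition makes such a
set `S` invariant: if `B = S \ φ⁻¹(S)` had positive measure, with `D` as in the condition, then
`Cₙ = Sₙ \ φ⁻¹(Sₙ)` satisfies `B ⊆ φ⁻ⁿ(Cₙ)` a.e., so that for large `n` almost all of `D` lies in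
`Cₙ` as well as in `φ⁻¹(Cₙ)`, but these two sets are disjoint.

Conversely, if `Pⁿ 1_B → g`, take for `c` the mean of `g` and `D = {c ≤ g}`.
-/

section ConvergentVectors

variable {𝕜 E F : Type*} [NontriviallyNormedField 𝕜] [NormedAddCommGroup E] [NormedSpace 𝕜 E]
  [NormedAddCommGroup F] [NormedSpace 𝕜 F]

/-- The subspace of vectors whose orbit under the powers of `T` converges in norm. -/
def convergentVectors (T : E →L[𝕜] E) : Submodule 𝕜 E where
  carrier := {f | ∃ g, Tendsto (fun n : ℕ => (T ^ n) f) atTop (𝓝 g)}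
  add_mem' := by
    rintro f₁ f₂ ⟨g₁, h₁⟩ ⟨g₂, h₂⟩
    exact ⟨g₁ + g₂, by simpa only [map_add] using h₁.add h₂⟩
  zero_mem' := ⟨0, by simp⟩
  smul_mem' := by
    rintro a f ⟨g, h⟩
    exact ⟨a • g, by simpa only [map_smul] using h.const_smul a⟩

theorem mem_convergentVectors_of_apply_eq {T : E →L[𝕜] E} {f : E} (hf : T f = f) :
    f ∈ convergentVectors T := by
  refine ⟨f, tendsto_const_nhds.congr fun n => ?_⟩
  rw [FunLike.coe_pow_eq_iterate, Function.iterate_fixed hf]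

theorem mem_convergentVectors_of_pow_apply_eq_zero {T : E →L[𝕜] E} {f : E} {k : ℕ}
    (hf : (T ^ k) f = 0) : f ∈ convergentVectors T := by
  refine ⟨0, tendsto_const_nhds.congr' ?_⟩
  filter_upwards [eventually_ge_atTop k] with n hn
  rw [← Nat.sub_add_cancel hn, pow_add, mul_apply_eq_comp, hf, map_zero]

theorem mem_convergentVectors_of_semiconj {T : E →L[𝕜] E} {S : F →L[𝕜] F} {ι : E → F}
    (hι : Continuous ι) (hTS : Function.Semiconj ι T S) {f : E} (hf : f ∈ convergentVectors T) :
    ι f ∈ convergentVectors S := by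
  obtain ⟨g, hg⟩ := hf
  refine ⟨ι g, ((hι.tendsto g).comp hg).congr fun n => ?_⟩
  simpa only [Function.comp_apply, FunLike.coe_pow_eq_iterate] using hTS.iterate_right n f

theorem isClosed_convergentVectors [CompleteSpace E] {T : E →L[𝕜] E} {C : ℝ}
    (hT : ∀ n, ‖T ^ n‖ ≤ C) : IsClosed (convergentVectors T : Set E) := by
  have hC : 0 ≤ C := (norm_nonneg _).trans (hT 0)
  refine isClosed_of_closure_subset fun f hf => cauchySeq_tendsto_of_complete ?_
  rw [Metric.cauchySeq_iff']
  intro ε hε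
  obtain ⟨g, ⟨l, hl⟩, hfg⟩ := Metric.mem_closure_iff.1 hf (ε / (3 * (C + 1))) (by positivity)
  obtain ⟨N, hN⟩ := Metric.cauchySeq_iff'.1 hl.cauchySeq (ε / 3) (by positivity)
  have dist_lt (n : ℕ) : dist ((T ^ n) f) ((T ^ n) g) < ε / 3 := calc
    dist ((T ^ n) f) ((T ^ n) g) ≤ ‖T ^ n‖ * dist f g := (T ^ n).lipschitz.dist_le_mul f g
    _ ≤ C * dist f g := by gcongr; exact hT n
    _ ≤ (C + 1) * dist f g := by gcongr; linarith
    _ < (C + 1) * (ε / (3 * (C + 1))) := by gcongr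
    _ = ε / 3 := by field_simp
  refine ⟨N, fun n hn => ?_⟩
  calc dist ((T ^ n) f) ((T ^ N) f)
      ≤ dist ((T ^ n) f) ((T ^ n) g) + dist ((T ^ n) g) ((T ^ N) g)
        + dist ((T ^ N) g) ((T ^ N) f) := dist_triangle4 ..
    _ < ε / 3 + ε / 3 + ε / 3 := by
        have := dist_lt N
        rw [dist_comm] at this
        linarith [dist_lt n, hN n hn]
    _ = ε := by ring

theorem norm_pow_le_one_of_norm_le_one {T : E →L[𝕜] E} (hT : ‖T‖ ≤ 1) (n : ℕ) :
    ‖T ^ n‖ ≤ 1 := by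
  rcases n with _ | n
  · exact ContinuousLinearMap.norm_id_le
  · exact (norm_pow_le' T n.succ_pos).trans (pow_le_one₀ (norm_nonneg T) hT)

end ConvergentVectors

section Isometry

variable {𝕜 H : Type*} [RCLike 𝕜] [NormedAddCommGroup H] [InnerProductSpace 𝕜 H] [CompleteSpace H]

open ContinuousLinearMap

theorem adjoint_apply_self_of_linearIsometry (V : H →ₗᵢ[𝕜] H) (f : H) :
    adjoint V.toContinuousLinearMap (V f) = f :=
  ext_inner_right 𝕜 fun g => by
    rw [adjoint_inner_left]
    exact V.inner_map_map f g

theorem orthogonal_convergentVectors_adjoint_subset_range_iterate (V : H →ₗᵢ[𝕜] H) (n : ℕ) :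
    ((convergentVectors (adjoint V.toContinuousLinearMap))ᗮ : Set H) ⊆ range (V^[n]) := by
  set T := V.toContinuousLinearMap
  have hker : (adjoint (T ^ n)).ker ≤ convergentVectors (adjoint T) := fun f hf =>
    mem_convergentVectors_of_pow_apply_eq_zero (k := n) (by
      rwa [← star_eq_adjoint, ← star_pow])
  have hclosed : IsClosed ((T ^ n).range : Set H) := by
    rw [LinearMap.coe_range, coe_coe, FunLike.coe_pow_eq_iterate, V.coe_toContinuousLinearMap,
      ← V.coe_pow]
    exact (V ^ n).isometry.isClosedEmbedding.isClosed_range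
  intro f hf
  have hf' := Submodule.orthogonal_le hker hf
  rw [← orthogonal_range, Submodule.orthogonal_orthogonal_eq_closure,
    hclosed.submodule_topologicalClosure_eq] at hf'
  rwa [← SetLike.mem_coe, LinearMap.coe_range, coe_coe, FunLike.coe_pow_eq_iterate] at hf'

theorem convergentVectors_adjoint_eq_top (V : H →ₗᵢ[𝕜] H)
    (hV : ∀ f, (∀ n, f ∈ range V^[n]) → V f = f) :
    convergentVectors (adjoint V.toContinuousLinearMap) = ⊤ := by
  set S := convergentVectors (adjoint V.toContinuousLinearMap)
  have hS : IsClosed (S : Set H) :=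
    isClosed_convergentVectors (norm_pow_le_one_of_norm_le_one (by
      rw [adjoint.norm_map]; exact V.norm_toContinuousLinearMap_le))
  have : CompleteSpace S := hS.completeSpace_coe
  have hle : Sᗮ ≤ S := fun f hf => by
    have hfix : V f = f :=
      hV f fun n => orthogonal_convergentVectors_adjoint_subset_range_iterate V n hf
    refine mem_convergentVectors_of_apply_eq ?_
    conv_lhs => rw [← hfix, adjoint_apply_self_of_linearIsometry]
  rw [← Submodule.orthogonal_eq_bot_iff, eq_bot_iff, ← S.inf_orthogonal_eq_bot]
  exact le_inf hle le_rfl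

end Isometry

section MeasureTheory

variable {Ω E : Type*} [MeasurableSpace Ω] {μ : Measure Ω} [NormedAddCommGroup E]

theorem continuous_inclusion_Lp [IsFiniteMeasure μ] {p q : ℝ≥0∞} [Fact (1 ≤ p)] [Fact (1 ≤ q)]
    (hpq : p ≤ q) :
    Continuous (AddSubgroup.inclusion (Lp.antitone hpq : Lp E q μ ≤ Lp E p μ)) := by
  refine AddMonoidHomClass.continuous_of_bound _
    (μ univ ^ (1 / p.toReal - 1 / q.toReal)).toReal fun f => ?_
  have hpow : μ univ ^ (1 / p.toReal - 1 / q.toReal) ≠ ∞ := by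
    refine ENNReal.rpow_ne_top_of_nonneg (sub_nonneg.2 ?_) (measure_ne_top μ univ)
    rcases eq_or_ne q ∞ with rfl | hq
    · simp
    · exact one_div_le_one_div_of_le
        (ENNReal.toReal_pos (zero_lt_one.trans_le Fact.out).ne' (ne_top_of_le_ne_top hq hpq))
        (ENNReal.toReal_mono hq hpq)
  rw [mul_comm, Lp.norm_def, Lp.norm_def, ← ENNReal.toReal_mul]
  exact ENNReal.toReal_mono (ENNReal.mul_ne_top (Lp.eLpNorm_ne_top f) hpow)
    (eLpNorm_le_eLpNorm_mul_rpow_measure_univ hpq (Lp.aestronglyMeasurable f))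

theorem norm_setIntegral_le_norm_L1 [NormedSpace ℝ E] (f : Lp E 1 μ) (s : Set Ω) :
    ‖∫ x in s, f x ∂μ‖ ≤ ‖f‖ := by
  rw [L1.norm_eq_integral_norm]
  exact (norm_integral_le_integral_norm _).trans <|
    setIntegral_le_integral (L1.integrable_coeFn f).norm (ae_of_all _ fun _ => norm_nonneg _)

theorem ae_eq_of_forall_rat_preimage_Ioi_ae_eq {f g : Ω → ℝ}
    (h : ∀ q : ℚ, f ⁻¹' Ioi (q : ℝ) =ᵐ[μ] g ⁻¹' Ioi (q : ℝ)) : f =ᵐ[μ] g := by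
  filter_upwards [ae_all_iff.2 fun q => eventuallyEq_set.1 (h q)] with x hx
  exact eq_of_forall_rat_lt_iff_lt hx

end MeasureTheory

section PerronFrobenius

variable {Ω : Type*} [MeasurableSpace Ω] {μ : Measure Ω} {φ : Ω → Ω} {P : Lp ℝ 1 μ →L[ℝ] Lp ℝ 1 μ}

/-- `P` is the Perron–Frobenius operator of `φ` on `L¹(μ)`; the defining relation determines `P`
uniquely. -/
def IsPerronFrobenius (μ : Measure Ω) (φ : Ω → Ω) (P : Lp ℝ 1 μ →L[ℝ] Lp ℝ 1 μ) : Prop :=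
  ∀ (f : Lp ℝ 1 μ) (A : Set Ω), MeasurableSet A → ∫ x in A, (P f) x ∂μ = ∫ x in φ ⁻¹' A, f x ∂μ

namespace IsPerronFrobenius

theorem pow (hP : IsPerronFrobenius μ φ P) (hφ : Measurable φ) (n : ℕ) :
    IsPerronFrobenius μ φ^[n] (P ^ n) := by
  induction n with
  | zero => exact fun f A _ => rfl
  | succ k ih =>
    intro f A hA
    rw [pow_succ', mul_apply_eq_comp, hP _ _ hA, ih _ _ (hφ hA), ← preimage_comp,
      ← Function.iterate_succ']

theorem norm_le_one (hP : IsPerronFrobenius μ φ P) (hφ : Measurable φ) : ‖P‖ ≤ 1 := by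
  refine P.opNorm_le_bound zero_le_one fun f => ?_
  have hf := L1.integrable_coeFn f
  set A : Set Ω := {x | 0 ≤ P f x}
  have hA : MeasurableSet A :=
    measurableSet_le measurable_const (Lp.stronglyMeasurable _).measurable
  have norm_eq_on : ∫ x in A, ‖P f x‖ ∂μ = ∫ x in A, P f x ∂μ :=
    setIntegral_congr_fun hA fun x hx => Real.norm_of_nonneg hx
  have norm_eq_off : ∫ x in Aᶜ, ‖P f x‖ ∂μ = -∫ x in Aᶜ, P f x ∂μ := by
    rw [← integral_neg]
    exact setIntegral_congr_fun hA.compl fun x (hx : ¬0 ≤ P f x) =>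
      Real.norm_of_nonpos (not_le.1 hx).le
  calc ‖P f‖ = ∫ x, ‖P f x‖ ∂μ := L1.norm_eq_integral_norm _
    _ = (∫ x in A, ‖P f x‖ ∂μ) + ∫ x in Aᶜ, ‖P f x‖ ∂μ :=
        (integral_add_compl hA (L1.integrable_coeFn _).norm).symm
    _ = (∫ x in φ ⁻¹' A, f x ∂μ) + -∫ x in (φ ⁻¹' A)ᶜ, f x ∂μ := by
        rw [norm_eq_on, norm_eq_off, hP f A hA, hP f Aᶜ hA.compl, preimage_compl]
    _ ≤ (∫ x in φ ⁻¹' A, ‖f x‖ ∂μ) + ∫ x in (φ ⁻¹' A)ᶜ, ‖f x‖ ∂μ :=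
        add_le_add ((le_abs_self _).trans (norm_integral_le_integral_norm f))
          ((neg_le_abs _).trans (norm_integral_le_integral_norm f))
    _ = 1 * ‖f‖ := by rw [integral_add_compl (hφ hA) hf.norm, one_mul, L1.norm_eq_integral_norm]

theorem setIntegral_indicatorConstLp (hP : IsPerronFrobenius μ φ P) (hφ : Measurable φ)
    {A B : Set Ω} (hA : MeasurableSet A) (hB : MeasurableSet B) (hμB : μ B ≠ ∞) :
    ∫ x in A, P (indicatorConstLp 1 hB hμB (1 : ℝ)) x ∂μ = μ.real (φ ⁻¹' A ∩ B) := by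
  rw [hP _ _ hA, MeasureTheory.setIntegral_indicatorConstLp (hφ hA), smul_eq_mul, mul_one,
    inter_comm]

theorem semiconj_inclusion [IsFiniteMeasure μ] (hP : IsPerronFrobenius μ φ P)
    (hφ : MeasurePreserving φ μ μ) :
    Function.Semiconj (AddSubgroup.inclusion (Lp.antitone one_le_two : Lp ℝ 2 μ ≤ Lp ℝ 1 μ))
      (ContinuousLinearMap.adjoint (Lp.compMeasurePreservingₗᵢ ℝ φ hφ).toContinuousLinearMap)
      P := by
  intro f
  refine (Lp.ext <| Integrable.ae_eq_of_forall_setIntegral_eq _ _ (L1.integrable_coeFn _)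
    (L1.integrable_coeFn _) fun A hA _ => ?_).symm
  set V := Lp.compMeasurePreservingₗᵢ (E := ℝ) (p := 2) ℝ φ hφ
  have hV : V (indicatorConstLp 2 hA (measure_ne_top μ A) (1 : ℝ)) =
      indicatorConstLp 2 (hφ.measurable hA) (measure_ne_top μ _) (1 : ℝ) :=
    Lp.indicatorConstLp_compMeasurePreserving hA (measure_ne_top _ _) 1 hφ
  calc ∫ x in A, P (AddSubgroup.inclusion (Lp.antitone one_le_two) f) x ∂μ
      = ∫ x in φ ⁻¹' A, f x ∂μ := hP _ A hA
    _ = inner ℝ (V (indicatorConstLp 2 hA (measure_ne_top μ A) 1)) f := by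
        rw [hV, L2.inner_indicatorConstLp_one]
    _ = inner ℝ (indicatorConstLp 2 hA (measure_ne_top μ A) 1)
          (ContinuousLinearMap.adjoint V.toContinuousLinearMap f) :=
        (ContinuousLinearMap.adjoint_inner_right V.toContinuousLinearMap _ _).symm
    _ = ∫ x in A, ContinuousLinearMap.adjoint V.toContinuousLinearMap f x ∂μ :=
        L2.inner_indicatorConstLp_one hA _ _

end IsPerronFrobenius

end PerronFrobenius

section LowerBound

variable {Ω : Type*} [MeasurableSpace Ω] {μ : Measure Ω} [IsFiniteMeasure μ] {φ : Ω → Ω}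
  {B D : Set Ω} {c : ℝ}

/-- The infimum, over measurable sets `A`, of `μ(φ⁻¹(A) ∩ B) - c μ(D ∩ A)`. Condition (ii) is about
the sequence of these gaps for the iterates `φ^[n]`. -/
noncomputable def lowerGap (μ : Measure Ω) (φ : Ω → Ω) (B D : Set Ω) (c : ℝ) : ℝ :=
  ⨅ A : {A : Set Ω // MeasurableSet A},
    ((μ (φ ⁻¹' (A : Set Ω) ∩ B)).toReal - c * (μ (D ∩ (A : Set Ω))).toReal)

/-- Condition (ii) for a single set `B`: asymptotically, the `n`-th image of `1_B` under the
Perron–Frobenius operator dominates `c 1_D`, uniformly over the measurable sets on which both are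
integrated. -/
def HasAsymptoticLowerBound (μ : Measure Ω) (φ : Ω → Ω) (B : Set Ω) : Prop :=
  ∃ D : Set Ω, MeasurableSet D ∧ 0 < μ D ∧ ∃ c : ℝ, 0 < c ∧
    0 ≤ atTop.liminf fun n : ℕ => lowerGap μ φ^[n] B D c

theorem neg_mul_measureReal_univ_le_sub (hc : 0 ≤ c) (φ : Ω → Ω) (B D A : Set Ω) :
    -(c * μ.real univ) ≤ μ.real (φ ⁻¹' A ∩ B) - c * μ.real (D ∩ A) := by
  have : c * μ.real (D ∩ A) ≤ c * μ.real univ :=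
    mul_le_mul_of_nonneg_left (measureReal_mono (subset_univ _)) hc
  linarith [measureReal_nonneg (μ := μ) (s := φ ⁻¹' A ∩ B)]

theorem neg_mul_measureReal_univ_le_lowerGap (hc : 0 ≤ c) (φ : Ω → Ω) (B D : Set Ω) :
    -(c * μ.real univ) ≤ lowerGap μ φ B D c :=
  le_ciInf fun A => neg_mul_measureReal_univ_le_sub hc φ B D A

theorem lowerGap_le (hc : 0 ≤ c) (φ : Ω → Ω) (B D : Set Ω) {A : Set Ω} (hA : MeasurableSet A) :
    lowerGap μ φ B D c ≤ μ.real (φ ⁻¹' A ∩ B) - c * μ.real (D ∩ A) := by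
  refine ciInf_le ⟨-(c * μ.real univ), ?_⟩ (⟨A, hA⟩ : {A : Set Ω // MeasurableSet A})
  rintro _ ⟨A', rfl⟩
  exact neg_mul_measureReal_univ_le_sub hc φ B D A'

theorem lowerGap_nonpos (hc : 0 ≤ c) (φ : Ω → Ω) (B D : Set Ω) : lowerGap μ φ B D c ≤ 0 := by
  simpa using lowerGap_le hc φ B D MeasurableSet.empty

theorem HasAsymptoticLowerBound.exists_measureReal_inter_lt (hB : HasAsymptoticLowerBound μ φ B) :
    ∃ D, 0 < μ D ∧ ∀ δ > 0, ∀ᶠ n in atTop, ∀ A, MeasurableSet A →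
      μ (φ^[n] ⁻¹' A ∩ B) = 0 → μ.real (D ∩ A) < δ := by
  obtain ⟨D, -, hμD, c, hc, hlim⟩ := hB
  refine ⟨D, hμD, fun δ hδ => ?_⟩
  have hbdd : IsBoundedUnder (· ≥ ·) atTop fun n => lowerGap μ φ^[n] B D c :=
    isBoundedUnder_of ⟨_, fun n => neg_mul_measureReal_univ_le_lowerGap hc.le _ B D⟩
  filter_upwards [eventually_lt_of_lt_liminf
    ((neg_lt_zero.2 (mul_pos hc hδ)).trans_le hlim) hbdd] with n hn A hA hnull
  have := hn.trans_le (lowerGap_le hc.le _ B D hA)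
  rw [measureReal_def, hnull, ENNReal.toReal_zero, zero_sub, neg_lt_neg_iff] at this
  exact lt_of_mul_lt_mul_left this hc.le

theorem HasAsymptoticLowerBound.exists_not_disjoint (hB : HasAsymptoticLowerBound μ φ B)
    (hφ : Measurable φ) {C : ℕ → Set Ω} (hC : ∀ n, MeasurableSet (C n))
    (hBC : ∀ n, B ≤ᵐ[μ] φ^[n] ⁻¹' C n) : ∃ n, ¬Disjoint (C n) (φ ⁻¹' C n) := by
  obtain ⟨D, hμD, hD⟩ := hB.exists_measureReal_inter_lt
  have hpos : 0 < μ.real D := ENNReal.toReal_pos hμD.ne' (measure_ne_top μ D)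
  obtain ⟨N, hN⟩ := eventually_atTop.1 (hD (μ.real D / 2) (half_pos hpos))
  refine ⟨N + 1, fun hdisj => ?_⟩
  have hnull : μ (φ^[N + 1] ⁻¹' (C (N + 1))ᶜ ∩ B) = 0 := by
    rw [inter_comm, preimage_compl, ← sdiff_eq, ← ae_le_set]
    exact hBC (N + 1)
  have hsmall : μ.real (D ∩ (C (N + 1))ᶜ) < μ.real D / 2 :=
    hN (N + 1) N.le_succ _ (hC _).compl hnull
  have hsmall' : μ.real (D ∩ φ ⁻¹' (C (N + 1))ᶜ) < μ.real D / 2 :=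
    hN N le_rfl _ (hφ (hC _).compl) (by
      rwa [← preimage_comp, ← Function.iterate_succ'])
  have hcover : D ⊆ (D ∩ (C (N + 1))ᶜ) ∪ (D ∩ φ ⁻¹' (C (N + 1))ᶜ) := by
    rw [← inter_union_distrib_left, preimage_compl, ← compl_inter, hdisj.inter_eq, compl_empty,
      inter_univ]
  linarith [(measureReal_mono hcover).trans (measureReal_union_le (μ := μ) _ _)]

theorem preimage_ae_eq_self_of_forall_hasAsymptoticLowerBound (hφ : MeasurePreserving φ μ μ)
    (hlow : ∀ B, MeasurableSet B → 0 < μ B → HasAsymptoticLowerBound μ φ B) {S : Set Ω}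
    (hS : MeasurableSet S) (htail : ∀ n, ∃ A, MeasurableSet A ∧ φ^[n] ⁻¹' A =ᵐ[μ] S) :
    φ ⁻¹' S =ᵐ[μ] S := by
  choose A hA hAS using htail
  suffices hnull : μ (S \ φ ⁻¹' S) = 0 from
    (ae_eq_of_ae_subset_of_measure_ge (ae_le_set.2 hnull) (hφ.measure_preimage
      hS.nullMeasurableSet).le hS.nullMeasurableSet (measure_ne_top _ _)).symm
  by_contra hne
  have hdiff (n : ℕ) : φ^[n] ⁻¹' (A n \ φ ⁻¹' A n) =ᵐ[μ] (S \ φ ⁻¹' S : Set Ω) := by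
    have hpre : φ ⁻¹' (φ^[n] ⁻¹' A n) =ᵐ[μ] φ ⁻¹' S :=
      hφ.quasiMeasurePreserving.preimage_ae_eq (hAS n)
    rw [preimage_sdiff, ← preimage_comp, ← Function.iterate_succ', Function.iterate_succ,
      preimage_comp]
    exact (hAS n).diff hpre
  have hlow_diff : HasAsymptoticLowerBound μ φ (S \ φ ⁻¹' S) :=
    hlow _ (hS.diff (hφ.measurable hS)) (pos_iff_ne_zero.2 hne)
  obtain ⟨n, hn⟩ := hlow_diff.exists_not_disjoint hφ.measurable
    (fun n => (hA n).diff (hφ.measurable (hA n))) fun n => (hdiff n).symm.le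
  exact hn (disjoint_left.2 fun x hx hφx => hx.2 hφx.1)

theorem compMeasurePreserving_eq_self_of_mem_range_iterate {p : ℝ≥0∞} (hφ : MeasurePreserving φ μ μ)
    (hlow : ∀ B, MeasurableSet B → 0 < μ B → HasAsymptoticLowerBound μ φ B) {f : Lp ℝ p μ}
    (hf : ∀ n, f ∈ range (Lp.compMeasurePreserving φ hφ)^[n]) :
    Lp.compMeasurePreserving φ hφ f = f := by
  have measurable_coe (g : Lp ℝ p μ) : Measurable g := (Lp.stronglyMeasurable g).measurable
  refine Lp.ext ((Lp.coeFn_compMeasurePreserving f hφ).trans ?_)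
  refine ae_eq_of_forall_rat_preimage_Ioi_ae_eq fun q => ?_
  refine preimage_ae_eq_self_of_forall_hasAsymptoticLowerBound hφ hlow
    (measurable_coe f measurableSet_Ioi) fun n => ?_
  obtain ⟨g, rfl⟩ := hf n
  refine ⟨g ⁻¹' Ioi (q : ℝ), measurable_coe g measurableSet_Ioi, ?_⟩
  rw [Lp.compMeasurePreserving_iterate]
  exact ((Lp.coeFn_compMeasurePreserving g (hφ.iterate n)).preimage (Ioi (q : ℝ))).symm

end LowerBound

section Equivalence

variable {Ω : Type*} [MeasurableSpace Ω] {μ : Measure Ω} [IsFiniteMeasure μ] {φ : Ω → Ω}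
  {P : Lp ℝ 1 μ →L[ℝ] Lp ℝ 1 μ}

namespace IsPerronFrobenius

theorem neg_norm_sub_le_lowerGap (hP : IsPerronFrobenius μ φ P) (hφ : Measurable φ) {B D : Set Ω}
    (hB : MeasurableSet B) (hD : MeasurableSet D) {g : Lp ℝ 1 μ} {c : ℝ} (hcg : ∀ x ∈ D, c ≤ g x) :
    -‖P (indicatorConstLp 1 hB (measure_ne_top μ B) (1 : ℝ)) - g‖ ≤ lowerGap μ φ B D c := by
  refine le_ciInf fun ⟨A, hA⟩ => ?_
  set F := P (indicatorConstLp 1 hB (measure_ne_top μ B) (1 : ℝ))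
  have hF := (L1.integrable_coeFn F).integrableOn (s := D ∩ A)
  have hg := (L1.integrable_coeFn g).integrableOn (s := D ∩ A)
  have hint_F : ∫ x in D ∩ A, F x ∂μ ≤ μ.real (φ ⁻¹' A ∩ B) := by
    rw [hP.setIntegral_indicatorConstLp hφ (hD.inter hA) hB]
    exact measureReal_mono (inter_subset_inter_left _ (preimage_mono inter_subset_right))
  have hint_g : c * μ.real (D ∩ A) ≤ ∫ x in D ∩ A, g x ∂μ :=
    setIntegral_ge_of_const_le_real (hD.inter hA) (measure_ne_top _ _) (fun x hx => hcg x hx.1) hg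
  have hint_sub : -‖F - g‖ ≤ (∫ x in D ∩ A, F x ∂μ) - ∫ x in D ∩ A, g x ∂μ := by
    have hsub : ∫ x in D ∩ A, (F - g : Lp ℝ 1 μ) x ∂μ = ∫ x in D ∩ A, F x - g x ∂μ :=
      integral_congr_ae (ae_restrict_of_ae (Lp.coeFn_sub F g))
    rw [← integral_sub hF hg, ← hsub]
    exact neg_le_of_abs_le (norm_setIntegral_le_norm_L1 (F - g) (D ∩ A))
  change -‖F - g‖ ≤ μ.real (φ ⁻¹' A ∩ B) - c * μ.real (D ∩ A)
  linarith

theorem integral_eq_of_tendsto (hP : IsPerronFrobenius μ φ P) (hφ : Measurable φ) {B : Set Ω}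
    (hB : MeasurableSet B) {g : Lp ℝ 1 μ} (hg : Tendsto (fun n : ℕ =>
      (P ^ n) (indicatorConstLp 1 hB (measure_ne_top μ B) (1 : ℝ))) atTop (𝓝 g)) :
    ∫ x, g x ∂μ = μ.real B := by
  have hlim := ((continuous_setIntegral (E := ℝ) (μ := μ) univ).tendsto g).comp hg
  rw [← setIntegral_univ]
  refine tendsto_nhds_unique hlim (tendsto_const_nhds.congr fun n => ?_)
  rw [Function.comp_apply, (hP.pow hφ n).setIntegral_indicatorConstLp (hφ.iterate n) .univ,
    preimage_univ, univ_inter]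

theorem hasAsymptoticLowerBound_of_tendsto (hP : IsPerronFrobenius μ φ P) (hφ : Measurable φ)
    {B : Set Ω} (hB : MeasurableSet B) (hμB : 0 < μ B) {g : Lp ℝ 1 μ} (hg : Tendsto (fun n : ℕ =>
      (P ^ n) (indicatorConstLp 1 hB (measure_ne_top μ B) (1 : ℝ))) atTop (𝓝 g)) :
    HasAsymptoticLowerBound μ φ B := by
  have hμ : μ ≠ 0 := by
    rintro rfl
    exact hμB.ne rfl
  have hmean : 0 < ⨍ x, g x ∂μ := by
    rw [average_eq, hP.integral_eq_of_tendsto hφ hB hg, smul_eq_mul]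
    exact mul_pos
      (inv_pos.2 (ENNReal.toReal_pos (Measure.measure_univ_ne_zero.2 hμ) (measure_ne_top μ univ)))
      (ENNReal.toReal_pos hμB.ne' (measure_ne_top μ B))
  have hD : MeasurableSet {x | ⨍ y, g y ∂μ ≤ g x} :=
    measurableSet_le measurable_const (Lp.stronglyMeasurable g).measurable
  refine ⟨_, hD, measure_average_le_pos hμ (L1.integrable_coeFn g), _, hmean, ?_⟩
  refine (Tendsto.liminf_eq ?_).ge
  refine tendsto_of_tendsto_of_tendsto_of_le_of_le ?_ tendsto_const_nhds
    (fun n => (hP.pow hφ n).neg_norm_sub_le_lowerGap (hφ.iterate n) hB hD fun _ hx => hx)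
    fun n => lowerGap_nonpos hmean.le _ _ _
  simpa only [neg_zero] using (tendsto_iff_norm_sub_tendsto_zero.1 hg).neg

theorem inclusion_mem_convergentVectors (hP : IsPerronFrobenius μ φ P)
    (hφ : MeasurePreserving φ μ μ)
    (hlow : ∀ B, MeasurableSet B → 0 < μ B → HasAsymptoticLowerBound μ φ B) (f : Lp ℝ 2 μ) :
    AddSubgroup.inclusion (Lp.antitone one_le_two : Lp ℝ 2 μ ≤ Lp ℝ 1 μ) f ∈
      convergentVectors P := by
  refine mem_convergentVectors_of_semiconj (continuous_inclusion_Lp one_le_two)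
    (hP.semiconj_inclusion hφ) ?_
  rw [convergentVectors_adjoint_eq_top _ fun f hf =>
    compMeasurePreserving_eq_self_of_mem_range_iterate hφ hlow hf]
  exact Submodule.mem_top

theorem convergentVectors_eq_top (hP : IsPerronFrobenius μ φ P) (hφ : MeasurePreserving φ μ μ)
    (hlow : ∀ B, MeasurableSet B → 0 < μ B → HasAsymptoticLowerBound μ φ B) :
    convergentVectors P = ⊤ := by
  refine Submodule.eq_top_iff'.2 fun f => ?_
  refine Lp.induction ENNReal.one_ne_top (motive := (· ∈ convergentVectors P)) ?_ ?_ ?_ f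
  · intro a s hs hμs
    exact hP.inclusion_mem_convergentVectors hφ hlow (indicatorConstLp 2 hs hμs.ne a)
  · intro f g hf hg _ hfP hgP
    exact add_mem hfP hgP
  · exact isClosed_convergentVectors (norm_pow_le_one_of_norm_le_one (hP.norm_le_one hφ.measurable))

end IsPerronFrobenius

theorem stmt4_general (hφ : MeasurePreserving φ μ μ) (hP : IsPerronFrobenius μ φ P) :
    (∀ f : Lp ℝ 1 μ, ∃ g : Lp ℝ 1 μ, Tendsto (fun n : ℕ => (P ^ n) f) atTop (𝓝 g)) ↔
      ∀ B : Set Ω, MeasurableSet B → 0 < μ B → HasAsymptoticLowerBound μ φ B := by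
  constructor
  · intro hconv B hB hμB
    obtain ⟨g, hg⟩ := hconv (indicatorConstLp 1 hB (measure_ne_top μ B) 1)
    exact hP.hasAsymptoticLowerBound_of_tendsto hφ.measurable hB hμB hg
  · intro hlow
    exact Submodule.eq_top_iff'.1 (hP.convergentVectors_eq_top hφ hlow)

end Equivalence

theorem stmt4 {Ω : Type*} [m : MeasurableSpace Ω] (μ : Measure Ω) [IsProbabilityMeasure μ]
    (φ : Ω → Ω) (hmp : MeasurePreserving φ μ μ)
    (P : Lp ℝ 1 μ →L[ℝ] Lp ℝ 1 μ)
    (hP : ∀ (f : Lp ℝ 1 μ) (A : Set Ω), MeasurableSet A →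
      ∫ x in A, (P f) x ∂μ = ∫ x in φ ⁻¹' A, f x ∂μ) :
    (∀ f : Lp ℝ 1 μ, ∃ g : Lp ℝ 1 μ, Tendsto (fun n : ℕ => (P ^ n) f) atTop (𝓝 g)) ↔
    (∀ B : Set Ω, MeasurableSet B → 0 < μ B →
      ∃ D : Set Ω, MeasurableSet D ∧ 0 < μ D ∧ ∃ c : ℝ, 0 < c ∧
        0 ≤ atTop.liminf (fun n : ℕ => ⨅ A : {A : Set Ω // MeasurableSet A},
          ((μ (φ^[n] ⁻¹' (A : Set Ω) ∩ B)).toReal - c * (μ (D ∩ (A : Set Ω))).toReal))) :=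
  stmt4_general hmp hP
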